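/- Let ψ ∈ N(σ) and i ∈ {1, …, |N(σ)|} with Pr[ψ ↝ i] > 0. Then for every item e ∈ E \ dom(ψ): α·E[μ(e) | ψ ↝ i] ≥ E[δ⁺_ψ(e) | ψ ↝ i]·υ_ψ. -/

import Mathlib

/-!
Common framework for the Stochastic Submodular Cover problem
(Hellerstein–Kletenik–Parthasarathy, "A Tight Bound for Stochastic Submodular Cover").
-/

namespace SSC

open Finset
open scoped Classical

noncomputable section

variable {E O : Type*}

/-- A subrealization assigns to each item either a state or `none` (unassigned).
A realization corresponds to the case where every item is assigned. -/
abbrev Sub (E O : Type*) := E → Option O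

/-- `subext ψ ψ'` means `ψ ⊆ ψ'` as partial assignments of states to items. -/
def subext (ψ ψ' : Sub E O) : Prop := ∀ e o, ψ e = some o → ψ' e = some o

/-- `ssubext ψ ψ'` means `ψ ⊂ ψ'` (strict extension). -/
def ssubext (ψ ψ' : Sub E O) : Prop := subext ψ ψ' ∧ ψ ≠ ψ'

/-- Extend a subrealization `ψ` by assigning state `o` to item `e`. -/
def updateSub [DecidableEq E] (ψ : Sub E O) (e : E) (o : O) : Sub E O :=
  fun e' => if e' = e then some o else ψ e'

/-- View a (full) realization as a subrealization. -/
def toSub (φ : E → O) : Sub E O := fun e => some (φ e)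

variable [Fintype E] [DecidableEq E] [Fintype O] [DecidableEq O]

/-- An instance of the Stochastic Submodular Cover problem: positive item costs `c`,
a probability mass function `p` on realizations with mutually independent item states,
and a utility function `f` on subrealizations which is zero on the empty subrealization,
nonnegative, monotone and submodular (pointwise polymatroid), and equal to the goal
value `Q > 0` on every full realization (coverability). -/
structure Problem (E O : Type*) [Fintype E] [DecidableEq E] [Fintype O] [DecidableEq O] where
  c : E → ℝ
  c_pos : ∀ e, 0 < c e
  p : (E → O) → ℝ
  p_nonneg : ∀ φ, 0 ≤ p φ
  p_sum : ∑ φ : E → O, p φ = 1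
  indep : ∀ φ : E → O, p φ = ∏ e : E, ∑ φ' : E → O, if φ' e = φ e then p φ' else 0
  f : Sub E O → ℝ
  f_nonneg : ∀ ψ, 0 ≤ f ψ
  f_empty : f (fun _ => none) = 0
  f_mono : ∀ ψ ψ' : Sub E O, subext ψ ψ' → f ψ ≤ f ψ'
  f_submod : ∀ (ψ ψ' : Sub E O) (e : E) (o : O), subext ψ ψ' → ψ' e = none →
      f (updateSub ψ' e o) - f ψ' ≤ f (updateSub ψ e o) - f ψ
  Q : ℝ
  Q_pos : 0 < Q
  f_cover : ∀ φ : E → O, f (toSub φ) = Q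

variable (M : Problem E O)

/-- Expectation of a random variable `X` with respect to the random realization `Φ`. -/
def Ex (X : (E → O) → ℝ) : ℝ := ∑ φ : E → O, M.p φ * X φ

/-- Probability of an event `A` of the random realization `Φ`. -/
def Pr (A : (E → O) → Prop) : ℝ := ∑ φ : E → O, if A φ then M.p φ else 0

/-- Conditional expectation `E[X | A]`. -/
def cEx (X : (E → O) → ℝ) (A : (E → O) → Prop) : ℝ :=
  (∑ φ : E → O, if A φ then M.p φ * X φ else 0) / Pr M A

/-- The random marginal increase in utility `F_ψ(e)` from observing the state of `e`. -/
def Fm (ψ : Sub E O) (e : E) (φ : E → O) : ℝ := M.f (updateSub ψ e (φ e)) - M.f ψ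

/-- The unit price `υ(e|ψ) = c(e) / E[F_ψ(e)]`. -/
def price (ψ : Sub E O) (e : E) : ℝ := M.c e / Ex M (Fm M ψ e)

/-- An adaptive covering policy: at every subrealization `ψ` with `f ψ < Q` it selects an
item outside `dom ψ`. -/
def IsPolicy (π : Sub E O → E) : Prop := ∀ ψ : Sub E O, M.f ψ < M.Q → ψ (π ψ) = none

/-- The `α`-approximate adaptive greedy policy: at every `ψ` with `f ψ < Q` the unit price of
the selected item `σ ψ` is at most `α` times the minimum unit price, i.e.
`υ(σ ψ | ψ) ≤ α · υ(e | ψ)` for every `e ∉ dom ψ`, written multiplicatively so that infinite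
unit prices (zero expected marginal utility) are handled correctly. -/
def IsGreedy (α : ℝ) (σ : Sub E O → E) : Prop :=
  IsPolicy M σ ∧
    ∀ ψ : Sub E O, M.f ψ < M.Q → ∀ e : E, ψ e = none →
      M.c (σ ψ) * Ex M (Fm M ψ e) ≤ α * M.c e * Ex M (Fm M ψ (σ ψ))

/-- One step of executing policy `π` on realization `φ`. -/
def stepPol (π : Sub E O → E) (φ : E → O) (ψ : Sub E O) : Sub E O :=
  if M.f ψ < M.Q then updateSub ψ (π ψ) (φ (π ψ)) else ψ

/-- The subrealization reached after `n` steps of executing `π` on `φ`. -/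
def execAux (π : Sub E O → E) (φ : E → O) : ℕ → Sub E O
  | 0 => fun _ => none
  | n + 1 => stepPol M π φ (execAux π φ n)

/-- The cover `Ψ(π)` constructed by executing `π` on realization `φ`. -/
def cover (π : Sub E O → E) (φ : E → O) : Sub E O := execAux M π φ (Fintype.card E)

/-- `ψ` is visited when executing `π` on realization `φ`. -/
def visits (π : Sub E O → E) (φ : E → O) (ψ : Sub E O) : Prop := ∃ n, execAux M π φ n = ψ

/-- The set `S(π)` of items selected when executing `π` on `φ`. -/
def Ssel (π : Sub E O → E) (φ : E → O) : Finset E :=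
  Finset.univ.filter fun e => cover M π φ e ≠ none

/-- The cost `C(π)` incurred when executing `π` on `φ`. -/
def C (π : Sub E O → E) (φ : E → O) : ℝ := ∑ e ∈ Ssel M π φ, M.c e

/-- An adaptive covering policy of minimum expected cost. -/
def IsOptimal (π : Sub E O → E) : Prop :=
  IsPolicy M π ∧ ∀ π' : Sub E O → E, IsPolicy M π' → Ex M (C M π) ≤ Ex M (C M π')

/-- `N(π)`: the non-leaf nodes of the decision tree of `π` — subrealizations with
`f ψ < Q` that are visited with positive probability. -/
def Nnodes (π : Sub E O → E) : Finset (Sub E O) :=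
  Finset.univ.filter fun ψ => M.f ψ < M.Q ∧ 0 < Pr M fun φ => visits M π φ ψ

/-- The event `ψ ↝ i`, for a marker located at utility value `b = f(ρ_i)`:
`ψ` is the last subrealization visited by `σ` (on the given realization) whose
utility is at most `b`. -/
def leadsTo (σ : Sub E O → E) (b : ℝ) (ψ : Sub E O) (φ : E → O) : Prop :=
  visits M σ φ ψ ∧ M.f ψ ≤ b ∧
    ∀ ψ' : Sub E O, visits M σ φ ψ' → M.f ψ' ≤ b → subext ψ' ψ

/-- The revenue `λ_i = υ_ψ · ε_i` collected by `σ` from the marker located at utility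
value `b = f(ρ_i)` with interval length `εi`, where `ψ` is the unique subrealization
with `ψ ↝ i`. -/
def lam (σ : Sub E O → E) (b εi : ℝ) (φ : E → O) : ℝ :=
  ∑ ψ : Sub E O, if leadsTo M σ b ψ φ then price M ψ (σ ψ) * εi else 0

/-- The revenue `μ(e)` collected by the optimal policy `πs` from item `e`
(relative to the greedy policy `σ`, both executed on the same realization). -/
def mu (σ πs : Sub E O → E) (e : E) (φ : E → O) : ℝ :=
  if e ∈ Ssel M πs φ then
    if e ∈ Ssel M σ φ then
      ∑ ψ : Sub E O,
        if visits M σ φ ψ ∧ M.f ψ < M.Q ∧ σ ψ = e then price M ψ e * Fm M ψ e φ else 0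
    else M.c e
  else 0

/-- The total revenue `μ*` collected by the optimal policy. -/
def muStar (σ πs : Sub E O → E) (φ : E → O) : ℝ := ∑ e : E, mu M σ πs e φ

/-- Replay of the internal state of policy `πs` in the second stage of the hybrid policy:
starting from the empty subrealization, repeatedly query `πs`; an item whose state is
already recorded in `ψ'` is not re-selected, its recorded state being used instead. -/
def replayAux (πs : Sub E O → E) (ψ' : Sub E O) : ℕ → Sub E O
  | 0 => fun _ => none
  | n + 1 =>
    if M.f (replayAux πs ψ' n) < M.Q then
      match ψ' (πs (replayAux πs ψ' n)) with
      | some o => updateSub (replayAux πs ψ' n) (πs (replayAux πs ψ' n)) o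
      | none => replayAux πs ψ' n
    else replayAux πs ψ' n

/-- The hybrid policy `π^ψ0`: follow `σ` until `ψ0` is visited, then switch to executing
`πs` from the root of its tree, never re-selecting an item of `dom ψ0` and using the
state recorded in `ψ0` instead. -/
def hybrid (σ πs : Sub E O → E) (ψ0 : Sub E O) : Sub E O → E := fun ψ' =>
  if subext ψ0 ψ' then πs (replayAux M πs ψ' (Fintype.card E)) else σ ψ'

/-- `δ⁺_ψ0(e)`: the marginal utility obtained by the hybrid policy `π^ψ0` when it selects
`e` during its second stage, and `0` if `e` is not selected in the second stage. -/
def deltaPlus (σ πs : Sub E O → E) (ψ0 : Sub E O) (e : E) (φ : E → O) : ℝ :=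
  ∑ ψ' : Sub E O,
    if subext ψ0 ψ' ∧ visits M (hybrid M σ πs ψ0) φ ψ' ∧
        ssubext ψ' (cover M (hybrid M σ πs ψ0) φ) ∧ hybrid M σ πs ψ0 ψ' = e
    then Fm M ψ' e φ else 0


/-! ### Helper lemmas -/

set_option linter.unusedSectionVars false

lemma subext_refl' (ψ : Sub E O) : subext ψ ψ := fun _ _ h => h

lemma subext_trans' {a b d : Sub E O} (h1 : subext a b) (h2 : subext b d) : subext a d :=
  fun e o h => h2 e o (h1 e o h)

lemma subext_antisymm' {a b : Sub E O} (h1 : subext a b) (h2 : subext b a) : a = b := by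
  funext e
  cases ha : a e with
  | some o => exact (h1 e o ha).symm
  | none =>
    cases hb : b e with
    | none => rfl
    | some o => rw [h2 e o hb] at ha; cases ha

lemma subext_none {a b : Sub E O} (h : subext a b) {e : E} (hb : b e = none) : a e = none := by
  cases ha : a e with
  | none => rfl
  | some o => rw [h e o ha] at hb; cases hb

lemma subext_update_none {ψ : Sub E O} {e : E} (h : ψ e = none) (o : O) :
    subext ψ (updateSub ψ e o) := by
  intro e' o' h'
  unfold updateSub
  split_ifs with h1
  · subst h1; rw [h] at h'; cases h'
  · exact h'

lemma subext_update_real {ψ : Sub E O} {φ : E → O} (h : subext ψ (toSub φ)) (e : E) :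
    subext ψ (updateSub ψ e (φ e)) := by
  intro e' o' h'
  unfold updateSub
  split_ifs with h1
  · subst h1; exact h _ _ h'
  · exact h'

lemma update_real_eq {ψ : Sub E O} {φ : E → O} (h : subext ψ (toSub φ)) {e : E}
    (he : ψ e ≠ none) : updateSub ψ e (φ e) = ψ := by
  funext e'
  unfold updateSub
  split_ifs with h1
  · subst h1
    cases hx : ψ e' with
    | none => exact absurd hx he
    | some o => exact h _ _ hx
  · rfl

lemma exec_sub_real (π : Sub E O → E) (φ : E → O) (n : ℕ) :
    subext (execAux M π φ n) (toSub φ) := by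
  induction n with
  | zero => intro e o h; simp [execAux] at h
  | succ n ih =>
    intro e o h
    simp only [execAux, stepPol] at h
    split_ifs at h with h1
    · unfold updateSub at h
      split_ifs at h with h2
      · subst h2; exact h
      · exact ih _ _ h
    · exact ih _ _ h

lemma exec_succ_ext (π : Sub E O → E) (φ : E → O) (n : ℕ) :
    subext (execAux M π φ n) (execAux M π φ (n+1)) := by
  simp only [execAux, stepPol]
  split_ifs
  · exact subext_update_real (exec_sub_real M π φ n) _
  · exact subext_refl' _

lemma exec_mono (π : Sub E O → E) (φ : E → O) {m n : ℕ} (h : m ≤ n) :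
    subext (execAux M π φ m) (execAux M π φ n) := by
  induction h with
  | refl => exact subext_refl' _
  | step _ ih => exact subext_trans' ih (exec_succ_ext M π φ _)

lemma exec_succ_lt {π : Sub E O → E} {φ : E → O} {n : ℕ} (h : M.f (execAux M π φ n) < M.Q) :
    execAux M π φ (n+1)
      = updateSub (execAux M π φ n) (π (execAux M π φ n)) (φ (π (execAux M π φ n))) := by
  simp [execAux, stepPol, h]

lemma exec_stuck {π : Sub E O → E} {φ : E → O} {n : ℕ} (h : ¬ M.f (execAux M π φ n) < M.Q)
    {m : ℕ} (hm : n ≤ m) : execAux M π φ m = execAux M π φ n := by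
  induction hm with
  | refl => rfl
  | step _ ih => simp only [execAux, stepPol]; rw [ih, if_neg h]

lemma exec_update (π : Sub E O → E) (φ : E → O) (e : E) (o : O) (n : ℕ)
    (h : execAux M π φ n e = none) :
    execAux M π (Function.update φ e o) n = execAux M π φ n := by
  induction n with
  | zero => rfl
  | succ n ih =>
    have h0 := subext_none (exec_succ_ext M π φ n) h
    have ih := ih h0
    by_cases hf : M.f (execAux M π φ n) < M.Q
    · rw [exec_succ_lt M hf] at h ⊢
      rw [exec_succ_lt M (by rw [ih]; exact hf), ih]
      have hne : π (execAux M π φ n) ≠ e := by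
        intro hh
        simp [updateSub, hh] at h
      rw [Function.update_of_ne hne]
    · have hf' : ¬ M.f (execAux M π (Function.update φ e o) n) < M.Q := by rw [ih]; exact hf
      rw [exec_stuck M hf (Nat.le_succ n), exec_stuck M hf' (Nat.le_succ n), ih]

lemma exec_card {π : Sub E O → E} (hπ : IsPolicy M π) {φ : E → O} {n : ℕ}
    (h : M.f (execAux M π φ n) < M.Q) :
    (Finset.univ.filter fun e => execAux M π φ n e ≠ none).card = n := by
  induction n with
  | zero => simp [execAux]
  | succ n ih =>
    have hf : M.f (execAux M π φ n) < M.Q :=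
      lt_of_le_of_lt (M.f_mono _ _ (exec_succ_ext M π φ n)) h
    have ih := ih hf
    have hn := hπ _ hf
    have : (Finset.univ.filter fun e => execAux M π φ (n+1) e ≠ none)
        = insert (π (execAux M π φ n))
            (Finset.univ.filter fun e => execAux M π φ n e ≠ none) := by
      ext e
      rw [Finset.mem_insert, Finset.mem_filter, Finset.mem_filter, exec_succ_lt M hf]
      simp only [updateSub, Finset.mem_univ, true_and]
      split_ifs with h1 <;> simp [h1]
    rw [this, Finset.card_insert_of_notMem (by simp [hn]), ih]

lemma exec_lt_card {π : Sub E O → E} (hπ : IsPolicy M π) {φ : E → O} {n : ℕ}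
    (h : M.f (execAux M π φ n) < M.Q) : n < Fintype.card E := by
  rw [← exec_card M hπ h, ← Finset.card_univ]
  apply Finset.card_lt_card
  rw [Finset.ssubset_univ_iff]
  intro hh
  have := Finset.mem_univ (π (execAux M π φ n))
  rw [← hh] at this
  simp [hπ _ h] at this

lemma mem_Ssel_of {π : Sub E O → E} (hπ : IsPolicy M π) {φ : E → O} {n : ℕ}
    (h : M.f (execAux M π φ n) < M.Q) : π (execAux M π φ n) ∈ Ssel M π φ := by
  have h1 := exec_lt_card M hπ h
  rw [Ssel, Finset.mem_filter]
  refine ⟨Finset.mem_univ _, ?_⟩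
  intro hh
  have := subext_none (exec_mono M π φ (Nat.succ_le_of_lt h1)) hh
  rw [Nat.succ_eq_add_one, exec_succ_lt M h] at this
  simp [updateSub] at this

lemma exec_some {π : Sub E O → E} {φ : E → O} {e : E} {n : ℕ} (h : execAux M π φ n e ≠ none) :
    ∃ m, M.f (execAux M π φ m) < M.Q ∧ π (execAux M π φ m) = e ∧ execAux M π φ m e = none := by
  induction n with
  | zero => simp [execAux] at h
  | succ n ih =>
    by_cases h0 : execAux M π φ n e = none
    · by_cases hf : M.f (execAux M π φ n) < M.Q
      · refine ⟨n, hf, ?_, h0⟩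
        rw [exec_succ_lt M hf] at h
        by_contra hne
        apply h
        simp [updateSub, Ne.symm hne, h0]
      · rw [exec_stuck M hf (Nat.le_succ n)] at h
        exact absurd h0 h
    · exact ih h0

/-- marginal probabilities -/
def qm (e : E) (o : O) : ℝ := ∑ φ' : E → O, if φ' e = o then M.p φ' else 0

lemma qm_nonneg (e : E) (o : O) : 0 ≤ qm M e o :=
  Finset.sum_nonneg fun φ _ => by split_ifs; exacts [M.p_nonneg φ, le_rfl]

lemma qm_sum (e : E) : ∑ o, qm M e o = 1 := by
  unfold qm
  rw [Finset.sum_comm, ← M.p_sum]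
  refine Finset.sum_congr rfl fun φ _ => ?_
  simp

lemma p_swap (φ : E → O) (e : E) (o : O) :
    M.p (Function.update φ e o) * qm M e (φ e) = M.p φ * qm M e o := by
  have h : ∀ φ : E → O, M.p φ = qm M e (φ e) * ∏ e' ∈ Finset.univ.erase e, qm M e' (φ e') := by
    intro φ
    rw [Finset.mul_prod_erase Finset.univ (fun e' => qm M e' (φ e')) (Finset.mem_univ e)]
    exact M.indep φ
  rw [h φ, h (Function.update φ e o), Function.update_self]
  have : ∏ e' ∈ Finset.univ.erase e, qm M e' (Function.update φ e o e')
      = ∏ e' ∈ Finset.univ.erase e, qm M e' (φ e') := by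
    refine Finset.prod_congr rfl fun e' he' => ?_
    rw [Function.update_of_ne (Finset.ne_of_mem_erase he')]
  rw [this]; ring

lemma resample (e : E) (G : (E → O) → ℝ) :
    ∑ φ, M.p φ * G φ = ∑ φ, M.p φ * ∑ o, qm M e o * G (Function.update φ e o) := by
  have h1 : ∑ φ, M.p φ * ∑ o, qm M e o * G (Function.update φ e o)
      = ∑ x : (E → O) × O, M.p x.1 * qm M e x.2 * G (Function.update x.1 e x.2) := by
    rw [Fintype.sum_prod_type]
    refine Finset.sum_congr rfl fun φ _ => ?_
    rw [Finset.mul_sum]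
    exact Finset.sum_congr rfl fun o _ => by ring
  have h2 : ∑ φ, M.p φ * G φ = ∑ x : (E → O) × O, M.p x.1 * qm M e x.2 * G x.1 := by
    rw [Fintype.sum_prod_type]
    refine Finset.sum_congr rfl fun φ _ => ?_
    have : ∀ o, M.p φ * qm M e o * G φ = qm M e o * (M.p φ * G φ) := fun o => by ring
    simp only [this]
    rw [← Finset.sum_mul, qm_sum, one_mul]
  rw [h1, h2]
  symm
  refine Finset.sum_bij' (fun x _ => (Function.update x.1 e x.2, x.1 e))
    (fun x _ => (Function.update x.1 e x.2, x.1 e)) ?_ ?_ ?_ ?_ ?_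
  · intros; simp
  · intros; simp
  · intros; simp
  · intros; simp
  · rintro ⟨φ, o⟩ _
    simp only
    rw [p_swap]

lemma Ex_Fm (ψ : Sub E O) (e : E) (φ : E → O) :
    Ex M (Fm M ψ e) = ∑ o, qm M e o * Fm M ψ e (Function.update φ e o) := by
  unfold Ex
  rw [resample M e]
  have : ∀ φ', ∑ o, qm M e o * Fm M ψ e (Function.update φ' e o)
      = ∑ o, qm M e o * Fm M ψ e (Function.update φ e o) := by
    intro φ'
    refine Finset.sum_congr rfl fun o _ => ?_
    simp [Fm]
  simp only [this]
  rw [← Finset.sum_mul, M.p_sum, one_mul]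

lemma Fm_nonneg_none {ψ : Sub E O} {e : E} (h : ψ e = none) (φ : E → O) : 0 ≤ Fm M ψ e φ :=
  sub_nonneg.2 (M.f_mono _ _ (subext_update_none h _))

lemma Fm_nonneg_real {ψ : Sub E O} {φ : E → O} (h : subext ψ (toSub φ)) (e : E) :
    0 ≤ Fm M ψ e φ :=
  sub_nonneg.2 (M.f_mono _ _ (subext_update_real h _))

lemma Ex_nonneg' {ψ : Sub E O} {e : E} (h : ψ e = none) : 0 ≤ Ex M (Fm M ψ e) :=
  Finset.sum_nonneg fun φ _ => mul_nonneg (M.p_nonneg φ) (Fm_nonneg_none M h φ)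

lemma Ex_greedy_pos {α : ℝ} {σ : Sub E O → E} (hσ : IsGreedy M α σ) {ψ : Sub E O}
    (hψ : M.f ψ < M.Q) : 0 < Ex M (Fm M ψ (σ ψ)) := by
  rcases (Ex_nonneg' M (hσ.1 ψ hψ)).lt_or_eq with h | h
  · exact h
  exfalso
  have hz : ∀ e, ψ e = none → Ex M (Fm M ψ e) = 0 := by
    intro e he
    have h1 := hσ.2 ψ hψ e he
    rw [← h, mul_zero] at h1
    have h2 := Ex_nonneg' M he
    have h3 := M.c_pos (σ ψ)
    nlinarith
  obtain ⟨φ, hφ⟩ : ∃ φ, 0 < M.p φ := by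
    by_contra hcon
    push Not at hcon
    have := M.p_sum
    rw [Finset.sum_eq_zero fun φ _ => le_antisymm (hcon φ) (M.p_nonneg φ)] at this
    exact zero_ne_one this
  have hF : ∀ e, ψ e = none → Fm M ψ e φ = 0 := by
    intro e he
    have h1 := hz e he
    unfold Ex at h1
    rw [Finset.sum_eq_zero_iff_of_nonneg
      (fun φ _ => mul_nonneg (M.p_nonneg φ) (Fm_nonneg_none M he φ))] at h1
    have := h1 φ (Finset.mem_univ _)
    rcases mul_eq_zero.1 this with h | h
    · exact absurd h hφ.ne'
    · exact h
  have key : ∀ S : Finset E,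
      M.f (fun e => if ψ e = none ∧ e ∈ S then some (φ e) else ψ e) ≤ M.f ψ := by
    intro S
    induction S using Finset.induction_on with
    | empty => simp
    | insert a S ha ih =>
      by_cases hψa : ψ a = none
      · have h1 : (fun e => if ψ e = none ∧ e ∈ insert a S then some (φ e) else ψ e)
            = updateSub (fun e => if ψ e = none ∧ e ∈ S then some (φ e) else ψ e) a (φ a) := by
          funext e
          unfold updateSub
          by_cases hea : e = a
          · subst hea; simp [hψa]
          · simp [hea]
        have h2 := M.f_submod ψ (fun e => if ψ e = none ∧ e ∈ S then some (φ e) else ψ e) a (φ a)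
          (by
            intro e o he
            simp [he]) (by simp [ha, hψa])
        have h3 := hF a hψa
        unfold Fm at h3
        rw [h1]
        linarith
      · have h1 : (fun e => if ψ e = none ∧ e ∈ insert a S then some (φ e) else ψ e)
            = (fun e => if ψ e = none ∧ e ∈ S then some (φ e) else ψ e) := by
          funext e
          by_cases hea : e = a
          · subst hea; simp [hψa]
          · simp [hea]
        rw [h1]; exact ih
  have h1 := key Finset.univ
  have h2 := M.f_cover (fun e => (ψ e).getD (φ e))
  have h3 : toSub (fun e => (ψ e).getD (φ e))
      = (fun e => if ψ e = none ∧ e ∈ Finset.univ then some (φ e) else ψ e) := by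
    funext e
    cases hx : ψ e <;> simp [toSub, hx]
  rw [h3] at h2
  linarith

lemma replay_sub (πs : Sub E O → E) (ψ' : Sub E O) (n : ℕ) :
    subext (replayAux M πs ψ' n) ψ' := by
  induction n with
  | zero => intro e o h; simp [replayAux] at h
  | succ n ih =>
    simp only [replayAux]
    split_ifs
    · split
      · rename_i o ho
        intro e o' h
        unfold updateSub at h
        split_ifs at h with h1
        · subst h1; rw [ho]; exact h
        · exact ih _ _ h
      · exact ih
    · exact ih

lemma replay_visits (πs : Sub E O → E) {ψ' : Sub E O} {φ : E → O} (h : subext ψ' (toSub φ))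
    (n : ℕ) : visits M πs φ (replayAux M πs ψ' n) := by
  induction n with
  | zero => exact ⟨0, rfl⟩
  | succ n ih =>
    simp only [replayAux]
    split_ifs with hf
    · split
      · rename_i o ho
        obtain ⟨m, hm⟩ := ih
        refine ⟨m+1, ?_⟩
        rw [exec_succ_lt M (by rw [hm]; exact hf), hm]
        have := h _ _ ho
        simp only [toSub, Option.some.injEq] at this
        rw [this]
      · exact ih
    · exact ih

/-- The hybrid policy selects `e` for the first time at `ψ'` in its second stage. -/
def selAt (σ πs : Sub E O → E) (ψ : Sub E O) (e : E) (φ : E → O) (ψ' : Sub E O) : Prop :=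
  subext ψ ψ' ∧ visits M (hybrid M σ πs ψ) φ ψ' ∧ M.f ψ' < M.Q ∧
    hybrid M σ πs ψ ψ' = e ∧ ψ' e = none

lemma selAt_unique {σ πs : Sub E O → E} {ψ : Sub E O} {e : E} {φ : E → O} {a b : Sub E O}
    (ha : selAt M σ πs ψ e φ a) (hb : selAt M σ πs ψ e φ b) : a = b := by
  obtain ⟨-, ⟨n, rfl⟩, hfa, hea, hna⟩ := ha
  obtain ⟨-, ⟨m, rfl⟩, hfb, heb, hnb⟩ := hb
  have key : ∀ n m, M.f (execAux M (hybrid M σ πs ψ) φ n) < M.Q →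
      hybrid M σ πs ψ (execAux M (hybrid M σ πs ψ) φ n) = e →
      execAux M (hybrid M σ πs ψ) φ m e = none → ¬ n < m := by
    intro n m hf he hn hlt
    have := subext_none (exec_mono M (hybrid M σ πs ψ) φ (Nat.succ_le_of_lt hlt)) hn
    rw [Nat.succ_eq_add_one, exec_succ_lt M hf, he] at this
    simp [updateSub] at this
  have h1 := key n m hfa hea hnb
  have h2 := key m n hfb heb hna
  have : n = m := by omega
  rw [this]

lemma selAt_update {σ πs : Sub E O → E} {ψ : Sub E O} {e : E} {φ : E → O} {a : Sub E O} (o : O)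
    (ha : selAt M σ πs ψ e φ a) : selAt M σ πs ψ e (Function.update φ e o) a := by
  obtain ⟨h1, ⟨n, rfl⟩, hfa, hea, hna⟩ := ha
  exact ⟨h1, ⟨n, exec_update M _ φ e o n hna⟩, hfa, hea, hna⟩

lemma selAt_mem {σ πs : Sub E O → E} (hπ : IsPolicy M πs) {ψ : Sub E O} {e : E} {φ : E → O}
    {a : Sub E O} (ha : selAt M σ πs ψ e φ a) : e ∈ Ssel M πs φ := by
  obtain ⟨h1, ⟨n, hn⟩, hfa, hea, hna⟩ := ha
  have hs : subext a (toSub φ) := by rw [← hn]; exact exec_sub_real M _ φ n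
  rw [hybrid, if_pos h1] at hea
  obtain ⟨m, hm⟩ := replay_visits M πs hs (Fintype.card E)
  have hf := lt_of_le_of_lt (M.f_mono _ _ (replay_sub M πs a (Fintype.card E))) hfa
  rw [← hm] at hf hea
  rw [← hea]
  exact mem_Ssel_of M hπ hf

lemma delta_term (σ πs : Sub E O → E) (ψ : Sub E O) (e : E) (φ : E → O) (ψ' : Sub E O) :
    (if subext ψ ψ' ∧ visits M (hybrid M σ πs ψ) φ ψ' ∧
        ssubext ψ' (cover M (hybrid M σ πs ψ) φ) ∧ hybrid M σ πs ψ ψ' = e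
    then Fm M ψ' e φ else 0) ≤ if selAt M σ πs ψ e φ ψ' then Fm M ψ' e φ else 0 := by
  by_cases hs : selAt M σ πs ψ e φ ψ'
  · rw [if_pos hs]
    split_ifs
    · exact le_rfl
    · exact Fm_nonneg_none M hs.2.2.2.2 φ
  · rw [if_neg hs]
    split_ifs with h
    · obtain ⟨h1, ⟨n, hn⟩, h3, h4⟩ := h
      have hsub : subext ψ' (toSub φ) := by rw [← hn]; exact exec_sub_real M _ φ n
      by_cases he : ψ' e = none
      · exfalso
        refine hs ⟨h1, ⟨n, hn⟩, ?_, h4, he⟩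
        by_contra hf
        have hlt : n ≤ Fintype.card E := by
          by_contra hgt
          apply h3.2
          refine subext_antisymm' h3.1 ?_
          rw [← hn]
          exact exec_mono M _ φ (by omega)
        apply h3.2
        rw [← hn] at hf
        rw [cover, exec_stuck M hf hlt, hn]
      · unfold Fm
        rw [update_real_eq hsub he, sub_self]
    · exact le_rfl

lemma delta_le_zero {σ πs : Sub E O → E} {ψ : Sub E O} {e : E} {φ : E → O}
    (h : ∀ a, ¬ selAt M σ πs ψ e φ a) : deltaPlus M σ πs ψ e φ ≤ 0 := by
  unfold deltaPlus
  refine Finset.sum_nonpos fun ψ' _ => ?_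
  have := delta_term M σ πs ψ e φ ψ'
  rw [if_neg (h ψ')] at this
  exact this

lemma delta_le {σ πs : Sub E O → E} {ψ : Sub E O} {e : E} {φ : E → O} {a : Sub E O}
    (h : selAt M σ πs ψ e φ a) : deltaPlus M σ πs ψ e φ ≤ Fm M ψ e φ := by
  have h1 : deltaPlus M σ πs ψ e φ ≤ ∑ ψ', if a = ψ' then Fm M ψ' e φ else 0 := by
    refine Finset.sum_le_sum fun ψ' _ => (delta_term M σ πs ψ e φ ψ').trans ?_
    by_cases hs : selAt M σ πs ψ e φ ψ'
    · rw [if_pos hs, if_pos (selAt_unique M h hs)]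
    · rw [if_neg hs, if_neg]
      rintro rfl
      exact hs h
  rw [Finset.sum_ite_eq, if_pos (Finset.mem_univ _)] at h1
  exact h1.trans (M.f_submod _ _ _ _ h.1 h.2.2.2.2)

lemma mu_term_nonneg {α : ℝ} {σ : Sub E O → E} (hσ : IsGreedy M α σ) (e : E) (φ : E → O)
    (ψ : Sub E O) :
    0 ≤ if visits M σ φ ψ ∧ M.f ψ < M.Q ∧ σ ψ = e then price M ψ e * Fm M ψ e φ else 0 := by
  split_ifs with h
  · obtain ⟨⟨n, hn⟩, hf, rfl⟩ := h
    refine mul_nonneg ?_ (Fm_nonneg_none M (hσ.1 _ hf) φ)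
    exact div_nonneg (M.c_pos _).le (Ex_greedy_pos M hσ hf).le
  · exact le_rfl

lemma mu_nonneg {α : ℝ} {σ πs : Sub E O → E} (hσ : IsGreedy M α σ) (e : E) (φ : E → O) :
    0 ≤ mu M σ πs e φ := by
  unfold mu
  split_ifs
  · exact Finset.sum_nonneg fun ψ _ => mu_term_nonneg M hσ e φ ψ
  · exact (M.c_pos e).le
  · exact le_rfl

lemma mu_ge {α : ℝ} {σ πs : Sub E O → E} (hσ : IsGreedy M α σ) {e : E} {φ : E → O}
    {ψ : Sub E O} (h1 : e ∈ Ssel M πs φ) (hv : visits M σ φ ψ) (hf : M.f ψ < M.Q)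
    (he : σ ψ = e) : price M ψ e * Fm M ψ e φ ≤ mu M σ πs e φ := by
  have h2 : e ∈ Ssel M σ φ := by
    obtain ⟨n, rfl⟩ := hv
    rw [← he]; exact mem_Ssel_of M hσ.1 hf
  unfold mu
  rw [if_pos h1, if_pos h2]
  have := Finset.single_le_sum (fun ψ _ => mu_term_nonneg M hσ e φ ψ) (Finset.mem_univ ψ)
  rw [if_pos ⟨hv, hf, he⟩] at this
  exact this

lemma leadsTo_update {σ : Sub E O → E} (hσ : IsPolicy M σ) {b : ℝ} {ψ : Sub E O}
    (hψ : M.f ψ < M.Q) {e : E} (he : ψ e = none) (hne : σ ψ ≠ e) {φ : E → O} (o : O)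
    (h : leadsTo M σ b ψ φ) : leadsTo M σ b ψ (Function.update φ e o) := by
  obtain ⟨⟨n, hn⟩, hb, hl⟩ := h
  have hf : M.f (execAux M σ φ n) < M.Q := by rw [hn]; exact hψ
  have hs := exec_succ_lt M hf
  rw [hn] at hs
  have hs0 : execAux M σ φ (n+1) e = none := by
    rw [hs]; simp [updateSub, hne.symm, he]
  have hgt : b < M.f (execAux M σ φ (n+1)) := by
    by_contra hle
    have h1 := hl _ ⟨n+1, rfl⟩ (not_lt.1 hle)
    have h2 := subext_none h1 (hσ ψ hψ)
    rw [hs] at h2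
    simp [updateSub] at h2
  have e1 := exec_update M σ φ e o n (by rw [hn]; exact he)
  have e2 := exec_update M σ φ e o (n+1) hs0
  refine ⟨⟨n, by rw [e1, hn]⟩, hb, ?_⟩
  rintro ψ' ⟨m, rfl⟩ hm
  rcases Nat.lt_or_ge n m with h1 | h1
  · have := M.f_mono _ _ (exec_mono M σ (Function.update φ e o) (Nat.succ_le_of_lt h1))
    rw [Nat.succ_eq_add_one, e2] at this
    linarith
  · have := exec_mono M σ (Function.update φ e o) h1
    rwa [e1, hn] at this

lemma mu_avg {α : ℝ} {σ πs : Sub E O → E} (hσ : IsGreedy M α σ) {e : E} {φ : E → O}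
    (h : ∀ o, e ∈ Ssel M πs (Function.update φ e o)) :
    M.c e ≤ ∑ o, qm M e o * mu M σ πs e (Function.update φ e o) := by
  by_cases hs : cover M σ φ e = none
  · have : ∀ o, mu M σ πs e (Function.update φ e o) = M.c e := by
      intro o
      have : e ∉ Ssel M σ (Function.update φ e o) := by
        simp only [Ssel, Finset.mem_filter, Finset.mem_univ, true_and, not_not]
        unfold cover at hs ⊢
        rw [exec_update M σ φ e o _ hs, hs]
      unfold mu
      rw [if_pos (h o), if_neg this]
    simp only [this]
    rw [← Finset.sum_mul, qm_sum, one_mul]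
  · obtain ⟨m, hf, he, hn⟩ := exec_some M hs
    have h1 : ∑ o, qm M e o * (price M (execAux M σ φ m) e *
        Fm M (execAux M σ φ m) e (Function.update φ e o))
        ≤ ∑ o, qm M e o * mu M σ πs e (Function.update φ e o) := by
      refine Finset.sum_le_sum fun o _ => mul_le_mul_of_nonneg_left ?_ (qm_nonneg M e o)
      exact mu_ge M hσ (h o) ⟨m, exec_update M σ φ e o m hn⟩ hf he
    refine le_trans (le_of_eq ?_) h1
    have h2 := Ex_greedy_pos M hσ hf
    rw [he] at h2
    have h3 : ∀ o, qm M e o * (price M (execAux M σ φ m) e *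
        Fm M (execAux M σ φ m) e (Function.update φ e o)) = price M (execAux M σ φ m) e *
        (qm M e o * Fm M (execAux M σ φ m) e (Function.update φ e o)) := fun o => by ring
    simp only [h3]
    rw [← Finset.mul_sum, ← Ex_Fm, price, div_mul_cancel₀ _ h2.ne']

lemma main_sum {α : ℝ} (hα : 1 ≤ α) {σ πs : Sub E O → E} (hσ : IsGreedy M α σ)
    (hπ : IsPolicy M πs) (b : ℝ) {ψ : Sub E O} (hψ : M.f ψ < M.Q) {e : E} (he : ψ e = none) :
    (∑ φ, M.p φ * (if leadsTo M σ b ψ φ then deltaPlus M σ πs ψ e φ * price M ψ (σ ψ) else 0))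
      ≤ ∑ φ, M.p φ * (if leadsTo M σ b ψ φ then α * mu M σ πs e φ else 0) := by
  have hK := Ex_greedy_pos M hσ hψ
  have hpr : 0 ≤ price M ψ (σ ψ) := div_nonneg (M.c_pos _).le hK.le
  by_cases hne : σ ψ = e
  · refine Finset.sum_le_sum fun φ _ => mul_le_mul_of_nonneg_left ?_ (M.p_nonneg φ)
    split_ifs with hA
    · have hmu := mu_nonneg M (πs := πs) hσ e φ
      by_cases hD : ∃ a, selAt M σ πs ψ e φ a
      · obtain ⟨a, ha⟩ := hD
        have h1 := mu_ge M hσ (selAt_mem M hπ ha) hA.1 hψ hne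
        have h2 := mul_le_mul_of_nonneg_right (delta_le M ha) hpr
        rw [hne] at h2 ⊢
        nlinarith
      · push Not at hD
        have h1 := mul_le_mul_of_nonneg_right (delta_le_zero M hD) hpr
        have : 0 ≤ α * mu M σ πs e φ := mul_nonneg (by linarith) hmu
        linarith
    · exact le_rfl
  · rw [resample M e, resample M e (fun φ => if leadsTo M σ b ψ φ then α * mu M σ πs e φ else 0)]
    refine Finset.sum_le_sum fun φ _ => mul_le_mul_of_nonneg_left ?_ (M.p_nonneg φ)
    have hiff : ∀ o, leadsTo M σ b ψ (Function.update φ e o) ↔ leadsTo M σ b ψ φ := by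
      intro o
      constructor
      · intro h
        have := leadsTo_update M hσ.1 hψ he hne (φ e) h
        simpa using this
      · exact leadsTo_update M hσ.1 hψ he hne o
    simp only [hiff]
    by_cases hA : leadsTo M σ b ψ φ
    · simp only [if_pos hA]
      by_cases hD : ∃ o a, selAt M σ πs ψ e (Function.update φ e o) a
      · obtain ⟨o₀, a, ha⟩ := hD
        have ha' : ∀ o, selAt M σ πs ψ e (Function.update φ e o) a := by
          intro o
          have := selAt_update M o ha
          simpa using this
        have hL : ∑ o, qm M e o * (deltaPlus M σ πs ψ e (Function.update φ e o) * price M ψ (σ ψ))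
            ≤ ∑ o, qm M e o * (Fm M ψ e (Function.update φ e o) * price M ψ (σ ψ)) := by
          refine Finset.sum_le_sum fun o _ => mul_le_mul_of_nonneg_left ?_ (qm_nonneg M e o)
          exact mul_le_mul_of_nonneg_right (delta_le M (ha' o)) hpr
        have hL2 : ∑ o, qm M e o * (Fm M ψ e (Function.update φ e o) * price M ψ (σ ψ))
            = Ex M (Fm M ψ e) * price M ψ (σ ψ) := by
          rw [Ex_Fm M ψ e φ, Finset.sum_mul]
          exact Finset.sum_congr rfl fun o _ => by ring
        have hL3 : Ex M (Fm M ψ e) * price M ψ (σ ψ) ≤ α * M.c e := by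
          rw [price, mul_div_assoc', div_le_iff₀ hK]
          have := hσ.2 ψ hψ e he
          linarith
        have hR := mu_avg M (πs := πs) hσ (fun o => selAt_mem M hπ (ha' o))
        have hR2 : ∑ o, qm M e o * (α * mu M σ πs e (Function.update φ e o))
            = α * ∑ o, qm M e o * mu M σ πs e (Function.update φ e o) := by
          rw [Finset.mul_sum]
          exact Finset.sum_congr rfl fun o _ => by ring
        rw [hR2]
        have := mul_le_mul_of_nonneg_left hR (by linarith : (0:ℝ) ≤ α)
        linarith
      · push Not at hD
        refine Finset.sum_le_sum fun o _ => mul_le_mul_of_nonneg_left ?_ (qm_nonneg M e o)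
        have h1 := mul_le_mul_of_nonneg_right (delta_le_zero M (hD o)) hpr
        have : 0 ≤ α * mu M σ πs e (Function.update φ e o) :=
          mul_nonneg (by linarith) (mu_nonneg M hσ e _)
        linarith
    · simp [if_neg hA]

/-- For `ψ ∈ N(σ)` and a marker index `i` with `Pr[ψ ↝ i] > 0`, for every
item `e ∉ dom ψ`: `α·E[μ(e) | ψ ↝ i] ≥ E[δ⁺_ψ(e) | ψ ↝ i]·υ_ψ`. -/
theorem mu_delta_bound
    (M : Problem E O) (α : ℝ) (hα : 1 ≤ α)
    (σ : Sub E O → E) (hσ : IsGreedy M α σ)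
    (πs : Sub E O → E) (hπs : IsOptimal M πs)
    (t : ℕ) (ρ : ℕ → Sub E O)
    (hcard : t = (Nnodes M σ).card)
    (hρmem : ∀ i, 1 ≤ i → i ≤ t → ρ i ∈ Nnodes M σ)
    (hρinj : ∀ i j, 1 ≤ i → i ≤ t → 1 ≤ j → j ≤ t → ρ i = ρ j → i = j)
    (hρmono : ∀ i j, 1 ≤ i → i ≤ j → j ≤ t → M.f (ρ i) ≤ M.f (ρ j))
    (i : ℕ) (hi1 : 1 ≤ i) (hit : i ≤ t)
    (ψ : Sub E O) (hmem : ψ ∈ Nnodes M σ)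
    (hpos : 0 < Pr M (leadsTo M σ (M.f (ρ i)) ψ))
    (e : E) (he : ψ e = none) :
    cEx M (deltaPlus M σ πs ψ e) (leadsTo M σ (M.f (ρ i)) ψ) * price M ψ (σ ψ)
      ≤ α * cEx M (mu M σ πs e) (leadsTo M σ (M.f (ρ i)) ψ) := by
  have hψ : M.f ψ < M.Q := by
    simp only [Nnodes, Finset.mem_filter] at hmem
    exact hmem.2.1
  have h := main_sum M hα hσ hπs.1 (M.f (ρ i)) hψ he
  unfold cEx
  rw [div_mul_eq_mul_div, mul_div_assoc', div_le_div_iff_of_pos_right hpos, Finset.sum_mul,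
    Finset.mul_sum]
  refine le_trans (le_of_eq ?_) (h.trans (le_of_eq ?_))
  · refine Finset.sum_congr rfl fun φ _ => ?_
    split_ifs <;> ring
  · refine Finset.sum_congr rfl fun φ _ => ?_
    split_ifs <;> ring

end
end SSC
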